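/- arXiv:1610.01916 — 2 statements merged into one kernel-verified Lean document; each statement's English description precedes it below -/
import Mathlib

section
/- Quantitative division by powers of an analytic function (Lemma 2.3): Let d ≥ 1, let D' and D be open connected subsets of ℂ^d such that the closure of D' is compact and contained in D, let P be holomorphic on D and not identically zero, and let θ ∈ ℝ. Set A = {x ∈ D : P(x) ≠ 0 and P(x) = |P(x)|·e^{iθ}}. Then there exists a constant K > 0 such that for every n ∈ ℕ and every bounded holomorphic function f on D for which f/P^n is bounded on A, there exists a holomorphic function q on D' with f(x) = q(x)·P(x)^n for all x ∈ D' and sup_{x ∈ D'} |q(x)| ≤ K^n · sup_{x ∈ D} |f(x)|. -/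
open Set Complex

noncomputable section

/-!
Near every point of `D` the analytic discs `z ↦ x + z • v`, `‖z‖ ≤ 1`, can be taken with a common
direction `v` such that `P` has no zeros on their boundary circles. On such a disc `f / P ^ n` is a
meromorphic function of `z`. It has no pole: near a zero of the open map `z ↦ P (x + z • v)` there
are points `z` where `P` takes values on the given ray, and there the quotient is bounded. By the
mean value property `f x / P x ^ n` is therefore the average of `f / P ^ n` over the boundary
circle. This average never sees the zeros of `P`, so it is analytic in `x`, which gives the
quotient `q`. If `‖P‖ ≥ K⁻¹` on the boundary circle, the maximum principle on the disc gives
`‖q x‖ ≤ K ^ n * sup ‖f‖`, and `K` can be chosen uniformly for `x` in a compact set.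
-/

open Filter Topology Metric MeasureTheory
open scoped NNReal ENNReal Nat

theorem exists_forall_of_isCompact_of_monotone {X ι : Type*} [TopologicalSpace X]
    [SemilatticeSup ι] [Nonempty ι] {S : Set X} (hS : IsCompact S) {p : ι → X → Prop}
    (hp : ∀ x, Monotone fun i => p i x) (hloc : ∀ x ∈ S, ∃ i, ∀ᶠ y in 𝓝 x, p i y) :
    ∃ i, ∀ x ∈ S, p i x := by
  refine hS.induction_on (p := fun s => ∃ i, ∀ x ∈ s, p i x) ?_ ?_ ?_ ?_
  · simp
  · rintro s t hst ⟨i, hi⟩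
    exact ⟨i, fun x hx => hi x (hst hx)⟩
  · rintro s t ⟨i, hi⟩ ⟨j, hj⟩
    exact ⟨i ⊔ j, fun x hx => hx.elim (fun hs => hp x le_sup_left (hi x hs))
      fun ht => hp x le_sup_right (hj x ht)⟩
  · intro x hx
    obtain ⟨i, hi⟩ := hloc x hx
    exact ⟨_, mem_nhdsWithin_of_mem_nhds hi, i, fun _ => id⟩

section Taylor

variable {𝕜 E F : Type*} [NormedAddCommGroup E] [NormedAddCommGroup F]

theorem exists_norm_changeOrigin_mul_pow_le [NontriviallyNormedField 𝕜] [NormedSpace 𝕜 E]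
    [NormedSpace 𝕜 F] (p : FormalMultilinearSeries 𝕜 E F) {r r' : ℝ≥0}
    (hr : (r + r' : ℝ≥0∞) < p.radius) :
    ∃ T : ℝ≥0, ∀ y : E, ‖y‖₊ ≤ r → ∀ k, ‖p.changeOrigin y k‖₊ * r' ^ k ≤ T := by
  have hsum := NNReal.summable_sigma.1 (p.changeOriginSeries_summable_aux₁ hr)
  have hrp : (r : ℝ≥0∞) < p.radius := le_self_add.trans_lt hr
  refine ⟨_, fun y hy k => le_trans ?_ (hsum.2.le_tsum k fun _ _ => zero_le)⟩
  have hyp : (‖y‖₊ : ℝ≥0∞) < p.radius := (ENNReal.coe_le_coe.2 hy).trans_lt hrp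
  dsimp only
  rw [NNReal.tsum_mul_right]
  gcongr
  exact (p.nnnorm_changeOrigin_le k hyp).trans <|
    (p.changeOriginSeries_summable_aux₂ hyp k).tsum_le_tsum (fun s => by gcongr)
      (p.changeOriginSeries_summable_aux₂ hrp k)

variable [RCLike 𝕜] [NormedSpace 𝕜 E] [NormedSpace 𝕜 F] {f : E → F} {x : E}

variable (𝕜 f x) in
/-- The Taylor series of `f` at `x`. Unlike `ftaylorSeries`, its coefficients include the factors
`1 / k!`, so that it is a power series expansion of `f` wherever `f` is analytic. -/
def taylorPowerSeries : FormalMultilinearSeries 𝕜 E F :=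
  fun k => (k ! : 𝕜)⁻¹ • iteratedFDeriv 𝕜 k f x

variable (𝕜) in
/-- `f` is the sum of its Taylor series on the ball of radius `C⁻¹` about `x`, and the `k`-th
Taylor coefficient is at most `C ^ (k + 1)`. A single constant controls both the radius and the
coefficients, which makes the condition monotone in `C`. -/
structure HasTaylorGrowth (f : E → F) (C : ℝ≥0) (x : E) : Prop where
  hasFPowerSeriesOnBall : HasFPowerSeriesOnBall f (taylorPowerSeries 𝕜 f x) x (C⁻¹ : ℝ≥0)
  norm_le : ∀ k, ‖taylorPowerSeries 𝕜 f x k‖ ≤ C ^ (k + 1)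

theorem HasTaylorGrowth.pos {C : ℝ≥0} (h : HasTaylorGrowth 𝕜 f C x) : 0 < C := by
  simpa using h.hasFPowerSeriesOnBall.r_pos

theorem HasTaylorGrowth.mono {C C' : ℝ≥0} (h : HasTaylorGrowth 𝕜 f C x) (hC : C ≤ C') :
    HasTaylorGrowth 𝕜 f C' x where
  hasFPowerSeriesOnBall := h.hasFPowerSeriesOnBall.mono (by simpa using h.pos.trans_le hC)
    (ENNReal.coe_le_coe.2 (inv_anti₀ h.pos hC))
  norm_le k := (h.norm_le k).trans (by gcongr)

variable [CompleteSpace F]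

theorem norm_taylorPowerSeries_le {p : FormalMultilinearSeries 𝕜 E F} {r : ℝ≥0∞}
    (hf : HasFPowerSeriesOnBall f p x r) (k : ℕ) : ‖taylorPowerSeries 𝕜 f x k‖ ≤ ‖p k‖ := by
  refine ContinuousMultilinearMap.opNorm_le_bound (norm_nonneg _) fun v => ?_
  have hperm : ∀ σ : Equiv.Perm (Fin k), ‖p k fun i => v (σ i)‖ ≤ ‖p k‖ * ∏ i, ‖v i‖ := fun σ =>
    ((p k).le_opNorm _).trans_eq (by rw [Equiv.prod_comp σ fun i => ‖v i‖])
  calc ‖taylorPowerSeries 𝕜 f x k v‖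
      = (k ! : ℝ)⁻¹ * ‖∑ σ : Equiv.Perm (Fin k), p k fun i => v (σ i)‖ := by
        rw [← hf.iteratedFDeriv_eq_sum_of_completeSpace]
        simp [taylorPowerSeries, norm_smul]
    _ ≤ (k ! : ℝ)⁻¹ * ∑ _σ : Equiv.Perm (Fin k), ‖p k‖ * ∏ i, ‖v i‖ := by
        gcongr
        exact norm_sum_le_of_le _ fun σ _ => hperm σ
    _ = ‖p k‖ * ∏ i, ‖v i‖ := by
        simp [Fintype.card_perm, Nat.factorial_ne_zero]

theorem hasFPowerSeriesOnBall_taylorPowerSeries {p : FormalMultilinearSeries 𝕜 E F} {r : ℝ≥0∞}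
    (hf : HasFPowerSeriesOnBall f p x r) :
    HasFPowerSeriesOnBall f (taylorPowerSeries 𝕜 f x) x r where
  r_le := hf.r_le.trans (FormalMultilinearSeries.radius_le_of_le (norm_taylorPowerSeries_le hf))
  r_pos := hf.r_pos
  hasSum := hf.hasSum_iteratedFDeriv

theorem exists_eventually_hasTaylorGrowth (hf : AnalyticAt 𝕜 f x) :
    ∃ C, ∀ᶠ y in 𝓝 x, HasTaylorGrowth 𝕜 f C y := by
  obtain ⟨p, R, hp⟩ := hf
  obtain ⟨r, hr0, hrR⟩ : ∃ r : ℝ≥0, 0 < r ∧ (r + r : ℝ≥0∞) < R := by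
    obtain ⟨s, hs0, hsR⟩ := ENNReal.lt_iff_exists_nnreal_btwn.1 hp.r_pos
    refine ⟨s / 2, by simpa using hs0, ?_⟩
    rwa [← ENNReal.coe_add, add_halves]
  obtain ⟨T, hT⟩ := exists_norm_changeOrigin_mul_pow_le p (hrR.trans_le hp.r_le)
  refine ⟨max r⁻¹ T, ?_⟩
  filter_upwards [ball_mem_nhds x (NNReal.coe_pos.2 hr0)] with y hy
  have hyr : ‖y - x‖₊ ≤ r := (mem_ball_iff_norm.1 hy).le
  have hexp := hp.changeOrigin ((ENNReal.coe_le_coe.2 hyr).trans_lt (le_self_add.trans_lt hrR))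
  rw [add_sub_cancel] at hexp
  refine ⟨(hasFPowerSeriesOnBall_taylorPowerSeries hexp).mono ?_ ?_, fun k => ?_⟩
  · simp [hr0]
  · calc ((max r⁻¹ T)⁻¹ : ℝ≥0) ≤ (r : ℝ≥0∞) := by
          rw [ENNReal.coe_le_coe]
          exact inv_le_of_inv_le₀ hr0 (le_max_left _ _)
      _ ≤ R - ‖y - x‖₊ := by
          refine ENNReal.le_sub_of_add_le_right ENNReal.coe_ne_top (le_trans ?_ hrR.le)
          gcongr
  · refine (norm_taylorPowerSeries_le hexp k).trans ?_
    rw [← coe_nnnorm, ← NNReal.coe_pow, NNReal.coe_le_coe]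
    calc ‖p.changeOrigin (y - x) k‖₊ ≤ T * r⁻¹ ^ k := by
          rw [inv_pow, ← div_eq_mul_inv, le_div_iff₀ (by positivity)]
          exact hT _ hyr k
      _ ≤ max r⁻¹ T * max r⁻¹ T ^ k := by gcongr <;> simp
      _ = max r⁻¹ T ^ (k + 1) := (pow_succ' _ _).symm

theorem continuousAt_taylorPowerSeries (hf : AnalyticAt 𝕜 f x) (k : ℕ) :
    ContinuousAt (fun y => taylorPowerSeries 𝕜 f y k) x :=
  have hderiv : AnalyticOnNhd 𝕜 (iteratedFDeriv 𝕜 k f) {y | AnalyticAt 𝕜 f y} :=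
    AnalyticOnNhd.iteratedFDeriv (fun _ hy => hy) k
  (hderiv x hf).continuousAt.const_smul (k ! : 𝕜)⁻¹

end Taylor

section ParametricIntegral

variable {𝕜 E F T : Type*} [RCLike 𝕜] [NormedAddCommGroup E] [NormedSpace 𝕜 E]
  [NormedAddCommGroup F] [NormedSpace 𝕜 F] [NormedSpace ℝ F] [MeasurableSpace T] {μ : Measure T}

theorem hasFPowerSeriesOnBall_integral [IsFiniteMeasure μ] {Φ : T → E → F}
    {p : T → FormalMultilinearSeries 𝕜 E F} {x : E} {r : ℝ≥0} {B : ℝ} (hr : 0 < r)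
    (hΦ : ∀ᵐ t ∂μ, HasFPowerSeriesOnBall (Φ t) (p t) x r)
    (hp : ∀ k, AEStronglyMeasurable (fun t => p t k) μ)
    (hB : ∀ᵐ t ∂μ, ∀ k, ‖p t k‖ * r ^ k ≤ B) :
    HasFPowerSeriesOnBall (fun y => ∫ t, Φ t y ∂μ) (fun k => ∫ t, p t k ∂μ) x r := by
  have hcoeff : ∀ k, ∀ᵐ t ∂μ, ‖p t k‖ ≤ B / r ^ k := fun k => by
    filter_upwards [hB] with t ht
    exact (le_div_iff₀ (by positivity)).2 (ht k)
  refine ⟨FormalMultilinearSeries.le_radius_of_bound _ (B * μ.real univ) fun k => ?_,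
    by exact_mod_cast hr, fun {y} hy => ?_⟩
  · calc ‖∫ t, p t k ∂μ‖ * r ^ k ≤ B / r ^ k * μ.real univ * r ^ k := by
          gcongr
          exact norm_integral_le_of_norm_le_const (hcoeff k)
      _ = B * μ.real univ := by field_simp
  · have hyr : ‖y‖ / r < 1 := by
      rw [div_lt_one (by exact_mod_cast hr)]
      simpa [enorm_eq_nnnorm, ← NNReal.coe_lt_coe] using hy
    simp only [ContinuousMultilinearMap.integral_apply (Integrable.of_bound (hp _) _ (hcoeff _))]
    refine hasSum_integral_of_dominated_convergence (fun k _ => B * (‖y‖ / r) ^ k)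
      (fun k => ?_) (fun k => ?_) ?_ (integrable_const _) ?_
    · exact (ContinuousMultilinearMap.apply 𝕜 (fun _ : Fin k => E) F fun _ => y).continuous
        |>.comp_aestronglyMeasurable (hp k)
    · filter_upwards [hcoeff k] with t ht
      calc ‖p t k fun _ => y‖ ≤ ‖p t k‖ * ‖y‖ ^ k := by simpa using (p t k).le_opNorm fun _ => y
        _ ≤ B / r ^ k * ‖y‖ ^ k := by gcongr
        _ = B * (‖y‖ / r) ^ k := by ring
    · exact .of_forall fun _ =>
        (summable_geometric_of_lt_one (by positivity) hyr).mul_left _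
    · filter_upwards [hΦ] with t ht using ht.hasSum hy

theorem analyticAt_setIntegral_comp_add [TopologicalSpace T] [OpensMeasurableSpace T]
    [CompleteSpace F] {f : E → F} {γ : T → E} {s : Set T} {x : E} (hs : IsCompact s)
    (hsm : MeasurableSet s) (hμs : μ s ≠ ∞) (hγ : ContinuousOn γ s)
    (hf : ∀ t ∈ s, AnalyticAt 𝕜 f (x + γ t)) :
    AnalyticAt 𝕜 (fun y => ∫ t in s, f (y + γ t) ∂μ) x := by
  have hγx : ContinuousOn (fun t => x + γ t) s := continuousOn_const.add hγ
  have : IsFiniteMeasure (μ.restrict s) := isFiniteMeasure_restrict.2 hμs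
  obtain ⟨C, hC⟩ : ∃ C, ∀ y ∈ (fun t => x + γ t) '' s, HasTaylorGrowth 𝕜 f C y :=
    exists_forall_of_isCompact_of_monotone (hs.image_of_continuousOn hγx)
      (fun y C C' hCC' h => h.mono hCC')
      (forall_mem_image.2 fun t ht => exists_eventually_hasTaylorGrowth (hf t ht))
  rw [forall_mem_image] at hC
  rcases s.eq_empty_or_nonempty with rfl | ⟨t₀, ht₀⟩
  · simpa using analyticAt_const
  have hC0 : 0 < C := (hC ht₀).pos
  have hpow : HasFPowerSeriesOnBall (fun y => ∫ t in s, f (y + γ t) ∂μ)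
      (fun k => ∫ t in s, taylorPowerSeries 𝕜 f (x + γ t) k ∂μ) x (C⁻¹ : ℝ≥0) := by
    refine hasFPowerSeriesOnBall_integral (Φ := fun t y => f (y + γ t))
      (p := fun t => taylorPowerSeries 𝕜 f (x + γ t)) (B := C) (inv_pos.2 hC0) ?_ (fun k => ?_) ?_
    · filter_upwards [ae_restrict_mem hsm] with t ht
      simpa using (hC ht).hasFPowerSeriesOnBall.comp_sub (-γ t)
    · refine ContinuousOn.aestronglyMeasurable_of_isCompact (fun t ht => ?_) hs hsm
      exact (continuousAt_taylorPowerSeries (hf t ht) k).comp_continuousWithinAt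
        (f := fun t => x + γ t) (hγx t ht)
    · filter_upwards [ae_restrict_mem hsm] with t ht k
      rw [NNReal.coe_inv, inv_pow, ← div_eq_mul_inv, div_le_iff₀ (by positivity), ← pow_succ']
      exact (hC ht).norm_le k
  exact hpow.analyticAt

end ParametricIntegral

theorem analyticAt_circleAverage_comp_add_smul {E F : Type*} [NormedAddCommGroup E]
    [NormedSpace ℂ E] [NormedAddCommGroup F] [NormedSpace ℂ F] [CompleteSpace F] {f : E → F}
    {x v : E} {c : ℂ} {r : ℝ} (hf : ∀ z ∈ sphere c |r|, AnalyticAt ℂ f (x + z • v)) :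
    AnalyticAt ℂ (fun y => Real.circleAverage (fun z => f (y + z • v)) c r) x := by
  have hint : AnalyticAt ℂ
      (fun y => ∫ t in Icc 0 (2 * Real.pi), f (y + circleMap c r t • v)) x :=
    analyticAt_setIntegral_comp_add isCompact_Icc measurableSet_Icc measure_Icc_lt_top.ne
      (by fun_prop) fun t _ => hf _ (circleMap_mem_sphere' c r t)
  simp only [Real.circleAverage, intervalIntegral.integral_of_le Real.two_pi_pos.le,
    ← integral_Icc_eq_integral_Ioc]
  simpa only [← Complex.coe_smul] using analyticAt_const.fun_smul hint

theorem meromorphicOrderAt_nonneg_of_frequently_norm_le {𝕜 F : Type*} [NontriviallyNormedField 𝕜]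
    [NormedAddCommGroup F] [NormedSpace 𝕜 F] {f : 𝕜 → F} {w : 𝕜} {M : ℝ}
    (hf : ∃ᶠ z in 𝓝[≠] w, ‖f z‖ ≤ M) : 0 ≤ meromorphicOrderAt f w := by
  by_contra! hneg
  have hlarge : ∀ᶠ z in 𝓝[≠] w, M < ‖f z‖ :=
    (tendsto_norm_cobounded_atTop.comp
      (tendsto_cobounded_of_meromorphicOrderAt_neg hneg)).eventually_gt_atTop M
  obtain ⟨z, hle, hlt⟩ := (hf.and_eventually hlarge).exists
  exact hlt.not_ge hle

theorem exists_analyticOnNhd_eq_smul {𝕜 F : Type*} [NontriviallyNormedField 𝕜]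
    [NormedAddCommGroup F] [NormedSpace 𝕜 F] {U : Set 𝕜} {g : 𝕜 → 𝕜} {ψ : 𝕜 → F}
    (hg : AnalyticOnNhd 𝕜 g U) (hψ : AnalyticOnNhd 𝕜 ψ U)
    (hg0 : ∀ w ∈ U, ∃ᶠ z in 𝓝 w, g z ≠ 0)
    (hbdd : ∀ w ∈ U, g w = 0 → ∃ M, ∃ᶠ z in 𝓝[≠] w, ‖(g z)⁻¹ • ψ z‖ ≤ M) :
    ∃ h, AnalyticOnNhd 𝕜 h U ∧ ∀ w ∈ U, ψ w = g w • h w := by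
  have hmer : MeromorphicOn (fun z => (g z)⁻¹ • ψ z) U := fun w hw =>
    (hg w hw).meromorphicAt.inv.smul (hψ w hw).meromorphicAt
  have hord : ∀ w ∈ U, 0 ≤ meromorphicOrderAt (fun z => (g z)⁻¹ • ψ z) w := by
    intro w hw
    by_cases hgw : g w = 0
    · obtain ⟨M, hM⟩ := hbdd w hw hgw
      exact meromorphicOrderAt_nonneg_of_frequently_norm_le hM
    · exact (((hg w hw).inv hgw).smul (hψ w hw)).meromorphicOrderAt_nonneg
  let h := toMeromorphicNFOn (fun z => (g z)⁻¹ • ψ z) U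
  have hh : AnalyticOnNhd 𝕜 h U := fun w hw => by
    rw [← (meromorphicNFOn_toMeromorphicNFOn _ U hw).meromorphicOrderAt_nonneg_iff_analyticAt,
      meromorphicOrderAt_toMeromorphicNFOn hmer hw]
    exact hord w hw
  refine ⟨h, hh, fun w hw => ?_⟩
  have hne : ∀ᶠ z in 𝓝[≠] w, g z ≠ 0 :=
    (hg w hw).eventually_eq_zero_or_eventually_ne_zero.resolve_left fun hzero =>
      hg0 w hw (hzero.mono fun _ => not_not.2)
  have heq : ψ =ᶠ[𝓝[≠] w] fun z => g z • h z := by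
    filter_upwards [hmer.toMeromorphicNFOn_eq_self_on_nhdsNE hw, hne] with z hz hgz
    rw [show h z = (g z)⁻¹ • ψ z from hz, smul_inv_smul₀ hgz]
  exact (((hψ w hw).continuousAt.eventuallyEq_nhds_iff_eventuallyEq_nhdsNE
    ((hg w hw).smul (hh w hw)).continuousAt).1 heq).eq_of_nhds

theorem frequently_ne_zero_of_ne_zero_of_isPreconnected {𝕜 E F : Type*}
    [NontriviallyNormedField 𝕜] [NormedAddCommGroup E] [NormedSpace 𝕜 E] [NormedAddCommGroup F]
    [NormedSpace 𝕜 F] {f : E → F} {U : Set E} (hf : AnalyticOnNhd 𝕜 f U) (hU : IsPreconnected U)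
    (hne : ∃ y ∈ U, f y ≠ 0) {x : E} (hx : x ∈ U) : ∃ᶠ y in 𝓝 x, f y ≠ 0 := by
  obtain ⟨y, hy, hfy⟩ := hne
  intro hzero
  exact hfy (hf.eqOn_zero_of_preconnected_of_eventuallyEq_zero hU hx
    (hzero.mono fun _ => not_not.1) hy)

theorem eq_smul_circleAverage_inv_smul {F : Type*} [NormedAddCommGroup F] [NormedSpace ℂ F]
    [CompleteSpace F] {g : ℂ → ℂ} {ψ : ℂ → F} {c : ℂ} {r : ℝ} (hr : 0 ≤ r)
    (hg : AnalyticOnNhd ℂ g (closedBall c r)) (hψ : AnalyticOnNhd ℂ ψ (closedBall c r))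
    (hsphere : ∀ z ∈ sphere c r, g z ≠ 0)
    (hbdd : ∀ w ∈ closedBall c r, g w = 0 → ∃ M, ∃ᶠ z in 𝓝[≠] w, ‖(g z)⁻¹ • ψ z‖ ≤ M) :
    ψ c = g c • Real.circleAverage (fun z => (g z)⁻¹ • ψ z) c r := by
  obtain ⟨z₀, hz₀⟩ := (NormedSpace.sphere_nonempty (x := c)).2 hr
  obtain ⟨h, hh, hψh⟩ := exists_analyticOnNhd_eq_smul hg hψ
    (fun w hw => frequently_ne_zero_of_ne_zero_of_isPreconnected hg
      (convex_closedBall c r).isPreconnected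
      ⟨z₀, sphere_subset_closedBall hz₀, hsphere z₀ hz₀⟩ hw) hbdd
  have hcongr : Real.circleAverage (fun z => (g z)⁻¹ • ψ z) c r = Real.circleAverage h c r := by
    refine Real.circleAverage_congr_sphere fun z hz => ?_
    rw [abs_of_nonneg hr] at hz
    simp only [hψh z (sphere_subset_closedBall hz), inv_smul_smul₀ (hsphere z hz)]
  have hmean : Real.circleAverage h c r = h c := by
    rw [← abs_of_nonneg hr] at hh
    exact DiffContOnCl.circleAverage
      (hh.differentiableOn.mono closure_ball_subset_closedBall).diffContOnCl
  rw [hcongr, hmean, hψh c (mem_closedBall_self hr)]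

theorem frequently_ne_and_mem_of_accPt {E : Type*} [NormedAddCommGroup E] [NormedSpace ℂ E]
    {g : E → ℂ} {w : E} (hg : AnalyticAt ℂ g w) (hnc : ∃ᶠ z in 𝓝 w, g z ≠ g w) {R : Set ℂ}
    (hR : AccPt (g w) (𝓟 R)) : ∃ᶠ z in 𝓝 w, g z ≠ g w ∧ g z ∈ R :=
  (accPt_iff_frequently.1 hR).filter_mono
    (hg.eventually_constant_or_nhds_le_map_nhds.resolve_left fun hconst =>
      hnc (hconst.mono fun _ => not_not.2))

section Discs

variable {E F : Type*} [NormedAddCommGroup E] [NormedSpace ℂ E] [NormedAddCommGroup F]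
  [NormedSpace ℂ F] {D : Set E} {P : E → ℂ} {K : ℝ} {x v : E}

/-- The closed analytic disc `{x + z • v | ‖z‖ ≤ 1}` lies in `D` and `‖P‖ ≥ K⁻¹` on its boundary
circle. The radius of the disc is absorbed into the direction `v`. -/
structure IsAdmissibleDisc (D : Set E) (P : E → ℂ) (K : ℝ) (x v : E) : Prop where
  mem : ∀ z ∈ closedBall (0 : ℂ) 1, x + z • v ∈ D
  one_le : ∀ z ∈ sphere (0 : ℂ) 1, 1 ≤ K * ‖P (x + z • v)‖

namespace IsAdmissibleDisc

theorem mono (h : IsAdmissibleDisc D P K x v) {K' : ℝ} (hK : K ≤ K') :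
    IsAdmissibleDisc D P K' x v where
  mem := h.mem
  one_le z hz := (h.one_le z hz).trans (by gcongr)

theorem ne_zero (h : IsAdmissibleDisc D P K x v) {z : ℂ} (hz : z ∈ sphere (0 : ℂ) 1) :
    P (x + z • v) ≠ 0 := fun hP => by
  simpa [hP] using (h.one_le z hz).trans_lt' one_pos

theorem nonneg (h : IsAdmissibleDisc D P K x v) : 0 ≤ K :=
  nonneg_of_mul_nonneg_left (zero_le_one.trans (h.one_le 1 (by simp)))
    (norm_pos_iff.2 (h.ne_zero (by simp)))

theorem analyticOnNhd_comp (h : IsAdmissibleDisc D P K x v) {f : E → F}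
    (hf : AnalyticOnNhd ℂ f D) : AnalyticOnNhd ℂ (fun z : ℂ => f (x + z • v)) (closedBall 0 1) :=
  hf.comp (fun z _ => by fun_prop) h.mem

theorem norm_le_pow_mul (h : IsAdmissibleDisc D P K x v) {q : E → F} (hq : AnalyticOnNhd ℂ q D)
    {n : ℕ} {C : ℝ} (hC : ∀ y ∈ D, ‖P y ^ n • q y‖ ≤ C) : ‖q x‖ ≤ K ^ n * C := by
  have hdiff : DiffContOnCl ℂ (fun z : ℂ => q (x + z • v)) (ball 0 1) :=
    ((h.analyticOnNhd_comp hq).differentiableOn.mono closure_ball_subset_closedBall).diffContOnCl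
  have hsphere : ∀ z ∈ frontier (ball (0 : ℂ) 1), ‖q (x + z • v)‖ ≤ K ^ n * C := by
    intro z hz
    rw [frontier_ball _ one_ne_zero] at hz
    have hK := h.nonneg
    calc ‖q (x + z • v)‖ ≤ (K * ‖P (x + z • v)‖) ^ n * ‖q (x + z • v)‖ :=
          le_mul_of_one_le_left (norm_nonneg _) (one_le_pow₀ (h.one_le z hz))
      _ = K ^ n * ‖P (x + z • v) ^ n • q (x + z • v)‖ := by
          rw [norm_smul, norm_pow, mul_pow, mul_assoc]
      _ ≤ K ^ n * C := by
          gcongr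
          exact hC _ (h.mem z (sphere_subset_closedBall hz))
  simpa using Complex.norm_le_of_forall_mem_frontier_norm_le isBounded_ball hdiff hsphere
    (subset_closure (mem_ball_self one_pos))

theorem exists_frequently_norm_le (h : IsAdmissibleDisc D P K x v) (hP : AnalyticOnNhd ℂ P D)
    {R : Set ℂ} (hR : AccPt 0 (𝓟 R)) {n : ℕ} {f : E → F} {w : ℂ} (hw : w ∈ closedBall (0 : ℂ) 1)
    (hPw : P (x + w • v) = 0) (hfP : f =O[𝓝[P ⁻¹' R] (x + w • v)] fun y => P y ^ n) :
    ∃ M, ∃ᶠ z in 𝓝[≠] w, ‖(P (x + z • v) ^ n)⁻¹ • f (x + z • v)‖ ≤ M := by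
  obtain ⟨M, hM⟩ := hfP.bound
  have hslice := h.analyticOnNhd_comp hP
  have hnz : ∃ᶠ z in 𝓝 w, P (x + z • v) ≠ 0 :=
    frequently_ne_zero_of_ne_zero_of_isPreconnected hslice (convex_closedBall 0 1).isPreconnected
      ⟨1, by simp, h.ne_zero (by simp)⟩ hw
  have hmem : ∃ᶠ z in 𝓝 w, P (x + z • v) ≠ 0 ∧ P (x + z • v) ∈ R := by
    simpa only [hPw] using frequently_ne_and_mem_of_accPt (hslice w hw) (by simpa only [hPw])
      (by simpa only [hPw])
  have hbound : ∀ᶠ z in 𝓝 w, P (x + z • v) ∈ R →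
      ‖f (x + z • v)‖ ≤ M * ‖P (x + z • v) ^ n‖ :=
    (show Continuous fun z : ℂ => x + z • v by fun_prop).continuousAt.eventually
      (eventually_nhdsWithin_iff.1 hM)
  refine ⟨M, frequently_nhdsWithin_iff.2 ((hmem.and_eventually hbound).mono ?_)⟩
  rintro z ⟨⟨hPz, hzR⟩, hz⟩
  refine ⟨?_, fun hzw => hPz (by rwa [show z = w from hzw])⟩
  rw [norm_smul, norm_inv, inv_mul_le_iff₀ (norm_pos_iff.2 (pow_ne_zero n hPz)), mul_comm]
  exact hz hzR

theorem eq_smul_circleAverage [CompleteSpace F] (h : IsAdmissibleDisc D P K x v)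
    (hP : AnalyticOnNhd ℂ P D) {R : Set ℂ} (hR : AccPt 0 (𝓟 R)) {n : ℕ} {f : E → F}
    (hf : AnalyticOnNhd ℂ f D) (hfP : ∀ y ∈ D, f =O[𝓝[P ⁻¹' R] y] fun z => P z ^ n) :
    f x = P x ^ n •
      Real.circleAverage (fun z => (P (x + z • v) ^ n)⁻¹ • f (x + z • v)) 0 1 := by
  simpa using eq_smul_circleAverage_inv_smul zero_le_one ((h.analyticOnNhd_comp hP).fun_pow n)
    (h.analyticOnNhd_comp hf) (fun z hz => pow_ne_zero n (h.ne_zero hz)) fun w hw hPw =>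
      h.exists_frequently_norm_le hP hR hw (eq_zero_of_pow_eq_zero hPw) (hfP _ (h.mem w hw))

end IsAdmissibleDisc

theorem exists_disc_forall_sphere_ne_zero (hD : IsOpen D) (hP : AnalyticOnNhd ℂ P D) (hx : x ∈ D)
    (hnz : ∃ᶠ y in 𝓝 x, P y ≠ 0) :
    ∃ v : E, (∀ z ∈ closedBall (0 : ℂ) 1, x + z • v ∈ D) ∧
      ∀ z ∈ sphere (0 : ℂ) 1, P (x + z • v) ≠ 0 := by
  obtain ⟨ε, hε, hεD⟩ := Metric.isOpen_iff.1 hD x hx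
  obtain ⟨y, hPy, hy⟩ := (hnz.and_eventually (ball_mem_nhds x hε)).exists
  set u := y - x
  have hmem : ∀ z ∈ closedBall (0 : ℂ) 1, x + z • u ∈ D := fun z hz => by
    refine hεD (mem_ball_iff_norm.2 ?_)
    rw [add_sub_cancel_left, norm_smul]
    exact (mul_le_of_le_one_left (norm_nonneg _) (mem_closedBall_zero_iff.1 hz)).trans_lt
      (mem_ball_iff_norm.1 hy)
  have hslice : AnalyticOnNhd ℂ (fun z : ℂ => P (x + z • u)) (closedBall 0 1) :=
    hP.comp (fun z _ => by fun_prop) hmem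
  have hne : ∀ᶠ z in 𝓝[≠] (0 : ℂ), P (x + z • u) ≠ 0 :=
    (hslice 0 (by simp)).eventually_eq_zero_or_eventually_ne_zero.resolve_left fun hzero =>
      frequently_ne_zero_of_ne_zero_of_isPreconnected hslice
        (convex_closedBall 0 1).isPreconnected ⟨1, by simp, by simpa [u]⟩ (by simp)
        (hzero.mono fun _ => not_not.2)
  obtain ⟨δ, hδ, hδne⟩ := Metric.eventually_nhds_iff.1 (eventually_nhdsWithin_iff.1 hne)
  obtain ⟨r, hr, hrδ⟩ := exists_between (lt_min hδ one_pos)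
  refine ⟨(r : ℂ) • u, fun z hz => ?_, fun z hz => ?_⟩
  · rw [smul_smul]
    refine hmem _ (mem_closedBall_zero_iff.2 ?_)
    rw [norm_mul, Complex.norm_of_nonneg hr.le]
    exact mul_le_one₀ (mem_closedBall_zero_iff.1 hz) hr.le (hrδ.le.trans (min_le_right _ _))
  · rw [smul_smul]
    have hz1 : ‖z‖ = 1 := mem_sphere_zero_iff_norm.1 hz
    refine hδne ?_ (mul_ne_zero (norm_ne_zero_iff.1 (by simp [hz1])) (by exact_mod_cast hr.ne'))
    rw [dist_zero_right, norm_mul, hz1, one_mul, Complex.norm_of_nonneg hr.le]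
    exact hrδ.trans_le (min_le_left _ _)

theorem exists_eventually_isAdmissibleDisc (hD : IsOpen D) (hP : AnalyticOnNhd ℂ P D)
    (hx : x ∈ D) (hnz : ∃ᶠ y in 𝓝 x, P y ≠ 0) :
    ∃ K v, ∀ᶠ y in 𝓝 x, IsAdmissibleDisc D P K y v := by
  obtain ⟨v, hmem, hne⟩ := exists_disc_forall_sphere_ne_zero hD hP hx hnz
  have hline : Continuous fun p : E × ℂ => p.1 + p.2 • v := by fun_prop
  have hPcont : ∀ z ∈ sphere (0 : ℂ) 1,
      ContinuousAt (fun p : E × ℂ => ‖P (p.1 + p.2 • v)‖) (x, z) := fun z hz =>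
    ((hP _ (hmem z (sphere_subset_closedBall hz))).continuousAt.norm).comp
      (f := fun p : E × ℂ => p.1 + p.2 • v) (x := (x, z)) hline.continuousAt
  obtain ⟨z₀, hz₀, hmin⟩ := (isCompact_sphere (0 : ℂ) 1).exists_isMinOn
    (NormedSpace.sphere_nonempty.2 zero_le_one) (f := fun z => ‖P (x + z • v)‖) fun z hz =>
      ((hPcont z hz).comp (f := fun z : ℂ => (x, z)) (by fun_prop)).continuousWithinAt
  have hpos : 0 < ‖P (x + z₀ • v)‖ / 2 := half_pos (norm_pos_iff.2 (hne z₀ hz₀))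
  refine ⟨(‖P (x + z₀ • v)‖ / 2)⁻¹, v, ?_⟩
  have hin : ∀ᶠ y in 𝓝 x, ∀ z ∈ closedBall (0 : ℂ) 1, y + z • v ∈ D :=
    (isCompact_closedBall (0 : ℂ) 1).eventually_forall_of_forall_eventually fun z hz =>
      hline.continuousAt.eventually (hD.mem_nhds (hmem z hz))
  have hlarge : ∀ᶠ y in 𝓝 x, ∀ z ∈ sphere (0 : ℂ) 1,
      ‖P (x + z₀ • v)‖ / 2 < ‖P (y + z • v)‖ :=
    (isCompact_sphere (0 : ℂ) 1).eventually_forall_of_forall_eventually fun z hz =>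
      (hPcont z hz).eventually_const_lt
        ((half_lt_self (norm_pos_iff.2 (hne z₀ hz₀))).trans_le (hmin hz))
  filter_upwards [hin, hlarge] with y hyD hyP
  refine ⟨hyD, fun z hz => ?_⟩
  rw [← div_eq_inv_mul, one_le_div₀ hpos]
  exact (hyP z hz).le

end Discs

theorem exists_analyticOnNhd_eq_smul_of_locally {𝕜 E F : Type*} [NontriviallyNormedField 𝕜]
    [NormedAddCommGroup E] [NormedSpace 𝕜 E] [NormedAddCommGroup F] [NormedSpace 𝕜 F]
    [CompleteSpace F] {D : Set E} (hD : IsOpen D) {g : E → 𝕜} {f : E → F}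
    (hg : ∀ x ∈ D, ∃ᶠ y in 𝓝 x, g y ≠ 0)
    (hloc : ∀ x ∈ D, ∃ q : E → F, AnalyticAt 𝕜 q x ∧ ∀ᶠ y in 𝓝 x, f y = g y • q y) :
    ∃ q : E → F, AnalyticOnNhd 𝕜 q D ∧ ∀ x ∈ D, f x = g x • q x := by
  choose! Q hQ hfQ using hloc
  refine ⟨fun x => Q x x, fun x hx => (hQ x hx).congr ?_, fun x hx => (hfQ x hx).self_of_nhds⟩
  filter_upwards [(hQ x hx).eventually_analyticAt, (hfQ x hx).eventually_nhds, hD.mem_nhds hx]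
    with y hQxy hfy hy
  have hfreq : ∃ᶠ z in 𝓝 y, Q x z = Q y z := by
    refine ((hg y hy).and_eventually (hfy.and (hfQ y hy))).mono ?_
    rintro z ⟨hgz, hx, hy⟩
    exact smul_right_injective F hgz (hx.symm.trans hy)
  by_contra hne
  exact hfreq ((hQxy.continuousAt.prodMk (hQ y hy).continuousAt).eventually
    (isOpen_ne_fun continuous_fst continuous_snd |>.mem_nhds hne))

section Division

variable {E F : Type*} [NormedAddCommGroup E] [NormedSpace ℂ E] [NormedAddCommGroup F]
  [NormedSpace ℂ F] {D : Set E} {P : E → ℂ}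

theorem exists_analyticAt_eventually_eq_pow_smul [CompleteSpace F] (hD : IsOpen D)
    (hP : AnalyticOnNhd ℂ P D) {x : E} (hx : x ∈ D) (hnz : ∃ᶠ y in 𝓝 x, P y ≠ 0) {R : Set ℂ}
    (hR : AccPt 0 (𝓟 R)) {n : ℕ} {f : E → F} (hf : AnalyticOnNhd ℂ f D)
    (hfP : ∀ y ∈ D, f =O[𝓝[P ⁻¹' R] y] fun z => P z ^ n) :
    ∃ q : E → F, AnalyticAt ℂ q x ∧ ∀ᶠ y in 𝓝 x, f y = P y ^ n • q y := by
  obtain ⟨K, v, hdisc⟩ := exists_eventually_isAdmissibleDisc hD hP hx hnz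
  refine ⟨fun y => Real.circleAverage (fun z => (P (y + z • v) ^ n)⁻¹ • f (y + z • v)) 0 1, ?_,
    hdisc.mono fun y hy => hy.eq_smul_circleAverage hP hR hf hfP⟩
  refine analyticAt_circleAverage_comp_add_smul (f := fun y => (P y ^ n)⁻¹ • f y) fun z hz => ?_
  rw [abs_one] at hz
  have hxz := hdisc.self_of_nhds.mem z (sphere_subset_closedBall hz)
  exact (((hP _ hxz).fun_pow n).fun_inv
    (pow_ne_zero n (hdisc.self_of_nhds.ne_zero hz))).fun_smul (hf _ hxz)

theorem exists_analyticOnNhd_eq_pow_smul [CompleteSpace F] (hD : IsOpen D)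
    (hP : AnalyticOnNhd ℂ P D) (hnz : ∀ x ∈ D, ∃ᶠ y in 𝓝 x, P y ≠ 0) {R : Set ℂ}
    (hR : AccPt 0 (𝓟 R)) {n : ℕ} {f : E → F} (hf : AnalyticOnNhd ℂ f D)
    (hfP : ∀ x ∈ D, f =O[𝓝[P ⁻¹' R] x] fun y => P y ^ n) :
    ∃ q : E → F, AnalyticOnNhd ℂ q D ∧ ∀ x ∈ D, f x = P x ^ n • q x :=
  exists_analyticOnNhd_eq_smul_of_locally hD
    (fun x hx => (hnz x hx).mono fun _ => pow_ne_zero n)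
    fun x hx => exists_analyticAt_eventually_eq_pow_smul hD hP hx (hnz x hx) hR hf hfP

theorem exists_pos_forall_norm_le_pow_mul (hD : IsOpen D) (hP : AnalyticOnNhd ℂ P D)
    (hnz : ∀ x ∈ D, ∃ᶠ y in 𝓝 x, P y ≠ 0) {S : Set E} (hS : IsCompact S) (hSD : S ⊆ D) :
    ∃ K > 0, ∀ (n : ℕ) (q : E → F), AnalyticOnNhd ℂ q D →
      ∀ C, (∀ x ∈ D, ‖P x ^ n • q x‖ ≤ C) → ∀ x ∈ S, ‖q x‖ ≤ K ^ n * C := by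
  obtain ⟨K, hK⟩ : ∃ K, ∀ x ∈ S, ∃ v, IsAdmissibleDisc D P K x v := by
    refine exists_forall_of_isCompact_of_monotone hS
      (fun x K K' hKK' ⟨v, hv⟩ => ⟨v, hv.mono hKK'⟩) fun x hx => ?_
    obtain ⟨K, v, hdisc⟩ := exists_eventually_isAdmissibleDisc hD hP (hSD hx) (hnz x (hSD hx))
    exact ⟨K, hdisc.mono fun y hy => ⟨v, hy⟩⟩
  refine ⟨max K 1, by positivity, fun n q hq C hC x hx => ?_⟩
  obtain ⟨v, hv⟩ := hK x hx
  exact (hv.mono (le_max_left K 1)).norm_le_pow_mul hq hC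

theorem quantitative_division_by_powers_general [CompleteSpace F] (hD : IsOpen D)
    (hP : AnalyticOnNhd ℂ P D) (hnz : ∀ x ∈ D, ∃ᶠ y in 𝓝 x, P y ≠ 0) {S : Set E}
    (hS : IsCompact S) (hSD : S ⊆ D) :
    ∃ K > 0, ∀ R : Set ℂ, AccPt 0 (𝓟 R) → ∀ (n : ℕ) (f : E → F), AnalyticOnNhd ℂ f D →
      (∀ x ∈ D, f =O[𝓝[P ⁻¹' R] x] fun y => P y ^ n) →
      ∃ q : E → F, AnalyticOnNhd ℂ q D ∧ (∀ x ∈ D, f x = P x ^ n • q x) ∧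
        ∀ C, (∀ x ∈ D, ‖f x‖ ≤ C) → ∀ x ∈ S, ‖q x‖ ≤ K ^ n * C := by
  obtain ⟨K, hK0, hK⟩ := exists_pos_forall_norm_le_pow_mul (F := F) hD hP hnz hS hSD
  refine ⟨K, hK0, fun R hR n f hf hfP => ?_⟩
  obtain ⟨q, hq, hfq⟩ := exists_analyticOnNhd_eq_pow_smul hD hP hnz hR hf hfP
  exact ⟨q, hq, hfq, fun C hC => hK n q hq C fun x hx => hfq x hx ▸ hC x hx⟩

end Division

/-- The open ray of argument `θ`; an equation rather than `Complex.arg` is used so that `θ` need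
not be reduced modulo `2π`. -/
def openRay (θ : ℝ) : Set ℂ := {ζ | ζ ≠ 0 ∧ ζ = ‖ζ‖ * Complex.exp (θ * Complex.I)}

theorem accPt_zero_openRay (θ : ℝ) : AccPt 0 (𝓟 (openRay θ)) := by
  have hlim : Tendsto (fun s : ℝ => (s : ℂ) * Complex.exp (θ * Complex.I)) (𝓝[>] 0) (𝓝 0) :=
    ((show Continuous fun s : ℝ => (s : ℂ) * Complex.exp (θ * Complex.I) by fun_prop).tendsto' 0 0
      (by simp)).mono_left nhdsWithin_le_nhds
  refine accPt_iff_frequently.2 (hlim.frequently (Eventually.frequently ?_))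
  filter_upwards [self_mem_nhdsWithin] with s (hs : 0 < s)
  have hne : (s : ℂ) * Complex.exp (θ * Complex.I) ≠ 0 :=
    mul_ne_zero (by exact_mod_cast hs.ne') (exp_ne_zero _)
  exact ⟨hne, hne, by simp [norm_exp_ofReal_mul_I, abs_of_pos hs]⟩

/-- **Quantitative division by powers of an analytic function** (Lemma 2.3).
For domains `D' ⋐ D` and `P` holomorphic on `D`, not identically zero, there exists `K > 0`
such that for every `n` and every bounded holomorphic `f` on `D` with `f/P^n` bounded on the
argument level set `A = {x ∈ D : P x ≠ 0, arg (P x) = θ}`, the quotient `f/P^n` extends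
holomorphically to `D'` with norm bound `K^n · sup_D |f|`. -/
theorem quantitative_division_by_powers
    (d : ℕ) (hd : 1 ≤ d) (D' D : Set (Fin d → ℂ))
    (hD'open : IsOpen D') (hD'conn : IsConnected D')
    (hDopen : IsOpen D) (hDconn : IsConnected D)
    (hcl : closure D' ⊆ D) (hcompact : IsCompact (closure D'))
    (P : (Fin d → ℂ) → ℂ) (hP : AnalyticOnNhd ℂ P D)
    (hPne : ∃ x ∈ D, P x ≠ 0) (θ : ℝ) :
    ∃ K > 0, ∀ n : ℕ, ∀ f : (Fin d → ℂ) → ℂ,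
      AnalyticOnNhd ℂ f D →
      (∃ C, ∀ x ∈ D, ‖f x‖ ≤ C) →
      (∃ M, ∀ x ∈ D, P x ≠ 0 →
        P x = (‖P x‖ : ℂ) * Complex.exp (θ * Complex.I) →
        ‖f x‖ ≤ M * ‖P x‖ ^ n) →
      ∃ q : (Fin d → ℂ) → ℂ, AnalyticOnNhd ℂ q D' ∧
        (∀ x ∈ D', f x = q x * P x ^ n) ∧
        ∀ C, (∀ x ∈ D, ‖f x‖ ≤ C) →
          ∀ x ∈ D', ‖q x‖ ≤ K ^ n * C := by
  obtain ⟨K, hK0, hK⟩ := quantitative_division_by_powers_general (F := ℂ) hDopen hP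
    (fun _ => frequently_ne_zero_of_ne_zero_of_isPreconnected hP hDconn.isPreconnected hPne)
    hcompact hcl
  refine ⟨K, hK0, fun n f hf _ ⟨M, hM⟩ => ?_⟩
  obtain ⟨q, hq, hfq, hqK⟩ := hK (openRay θ) (accPt_zero_openRay θ) n f hf fun x hx =>
    .of_bound M <| eventually_nhdsWithin_iff.2 <| by
      filter_upwards [hDopen.mem_nhds hx] with y hy ⟨hPy, hray⟩
      simpa using hM y hy hPy hray
  have hD'D : D' ⊆ D := subset_closure.trans hcl
  exact ⟨q, hq.mono hD'D, fun x hx => (hfq x (hD'D hx)).trans (mul_comm _ _),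
    fun C hC x hx => hqK C hC x (subset_closure hx)⟩
end
end

section
/- Unique P-adic expansion of formal power series (Corollary 2.6): Let d ≥ 1, ℓ an injective linear form, P ∈ ℂ[[x_1,…,x_d]] nonzero with zero constant term, and a ∈ ℕ^d its ℓ-minimal exponent. Then for every f ∈ ℂ[[x_1,…,x_d]] there exists a unique sequence (g_n)_{n∈ℕ} of formal power series such that for every n the coefficient of x^β in g_n vanishes for all β ∈ a + ℕ^d, and for every N ∈ ℕ the difference f − Σ_{n<N} g_n·P^n lies in the ideal generated by P^N (so that f = Σ_{n=0}^∞ g_n·P^n in the m-adic topology). -/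
open Set Complex

noncomputable section

/-!
Write `w` for the linear form. For a fixed `f`, the equations saying that `f - q * P` has no
coefficient on `a + ℕ^d` determine the coefficients of `q` recursively along `w`: modulo the
coefficients of `q` of smaller weight, the coefficient of `x^(a + γ)` in `q * P` is
`coeff γ q * coeff a P`. As `w` is a well-founded measure on `ℕ^d` (Dickson's lemma), there is
exactly one quotient `q`. Dividing `f` by `P`, then the quotient by `P`, and so on, the successive
remainders are the `g n`, and uniqueness of the division makes them the only possible ones.
-/

theorem existsUnique_isFixedPt_of_wellFounded {ι X : Type*} [Nonempty X] {r : ι → ι → Prop}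
    (hr : WellFounded r) (F : (ι → X) → ι → X)
    (hF : ∀ q q' i, (∀ j, r j i → q j = q' j) → F q i = F q' i) :
    ∃! q, Function.IsFixedPt F q := by
  classical
  let extend (i : ι) (s : ∀ j, r j i → X) (j : ι) : X :=
    if h : r j i then s j h else Classical.arbitrary X
  let step (i : ι) (s : ∀ j, r j i → X) : X := F (extend i s) i
  let q : ι → X := hr.fix step
  have hq : Function.IsFixedPt F q := by
    funext i
    calc F q i = step i fun j _ => q j := hF _ _ i fun j hj => by simp [extend, hj]
      _ = q i := (hr.fix_eq step i).symm
  refine ⟨q, hq, fun q' hq' => funext fun i => ?_⟩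
  induction i using hr.induction with
  | _ i ih => rw [← hq', ← hq, hF q' q i ih]

section AdicExpansion

variable {A : Type*} [Ring A] {S : AddSubgroup A} {P f : A} {g q : ℕ → A}

theorem sum_range_sub_mul_mul_pow (q : ℕ → A) (P : A) (N : ℕ) :
    ∑ n ∈ Finset.range N, (q n - q (n + 1) * P) * P ^ n = q 0 - q N * P ^ N := by
  simpa [sub_mul, mul_assoc, ← pow_succ'] using Finset.sum_range_sub' (fun n => q n * P ^ n) N

theorem isRightRegular_of_existsUnique_sub_mul_mem (hdiv : ∀ f, ∃! q, f - q * P ∈ S) :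
    IsRightRegular P := by
  intro q q' hqq'
  have hq : q * P - q * P ∈ S := by simp
  have hq' : q * P - q' * P ∈ S := by simp [show q * P = q' * P from hqq']
  exact (hdiv (q * P)).unique hq hq'

theorem eq_sub_mul_of_forall_sub_sum_eq (hP : IsRightRegular P)
    (hq : ∀ N, f - ∑ n ∈ Finset.range N, g n * P ^ n = q N * P ^ N) (n : ℕ) :
    g n = q n - q (n + 1) * P := by
  refine hP.pow n ?_
  calc g n * P ^ n
      = (f - ∑ k ∈ Finset.range n, g k * P ^ k)
          - (f - ∑ k ∈ Finset.range (n + 1), g k * P ^ k) := by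
        rw [Finset.sum_range_succ]; abel
    _ = (q n - q (n + 1) * P) * P ^ n := by
        rw [hq, hq, sub_mul, mul_assoc, ← pow_succ']

theorem existsUnique_adic_expansion_of_existsUnique_sub_mul_mem
    (hdiv : ∀ f, ∃! q, f - q * P ∈ S) (f : A) :
    ∃! g : ℕ → A, (∀ n, g n ∈ S) ∧
      ∀ N, ∃ q, f - ∑ n ∈ Finset.range N, g n * P ^ n = q * P ^ N := by
  have hP := isRightRegular_of_existsUnique_sub_mul_mem hdiv
  choose quot quot_mem quot_unique using hdiv
  have iterate_succ (n : ℕ) : quot^[n + 1] f = quot (quot^[n] f) :=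
    Function.iterate_succ_apply' quot n f
  refine ⟨fun n => quot^[n] f - quot^[n + 1] f * P, ⟨fun n => ?_, fun N => ⟨quot^[N] f, ?_⟩⟩, ?_⟩
  · simpa only [iterate_succ] using quot_mem (quot^[n] f)
  · rw [sum_range_sub_mul_mul_pow (fun n => quot^[n] f), Function.iterate_zero_apply,
      sub_sub_cancel]
  · rintro g ⟨g_mem, hg⟩
    choose q hq using hg
    have g_eq := eq_sub_mul_of_forall_sub_sum_eq hP hq
    have q_eq (n : ℕ) : q n = quot^[n] f := by
      induction n with
      | zero => simpa using (hq 0).symm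
      | succ n ih =>
        rw [iterate_succ, ← ih]
        refine quot_unique _ _ ?_
        simpa only [g_eq] using g_mem n
    funext n
    rw [g_eq, q_eq, q_eq]

end AdicExpansion

theorem wellFounded_lt_of_monotone {α β : Type*} [Preorder α] [WellQuasiOrderedLE α]
    [Preorder β] {w : α → β} (hw : Monotone w) : WellFounded fun x y => w x < w y := by
  have : WellQuasiOrderedLE (range w) :=
    Monotone.wellQuasiOrderedLE_of_wellQuasiOrderedLE_of_surjective
      (f := rangeFactorization w) (fun _ _ h => hw h) rangeFactorization_surjective
  exact InvImage.wf (rangeFactorization w) wellFounded_lt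

theorem monotone_weight {σ M : Type*} [AddCommMonoid M] [Preorder M] [IsOrderedAddMonoid M]
    {ℓ : σ → M} (hℓ : ∀ j, 0 ≤ ℓ j) :
    Monotone (Finsupp.weight ℓ : (σ →₀ ℕ) →+ M) := by
  intro β γ h
  obtain ⟨δ, rfl⟩ := exists_add_of_le h
  rw [map_add, Finsupp.weight_apply ℓ δ]
  exact le_add_of_nonneg_right (Finset.sum_nonneg fun j _ => nsmul_nonneg (hℓ j) _)

section WeierstrassDivision

open MvPowerSeries

variable {σ R M : Type*} [Ring R]

/-- The power series all of whose exponents lie outside `a + ℕ^σ`: the possible remainders in the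
division by a power series with initial exponent `a`. -/
def remainders (R : Type*) [Ring R] (a : σ →₀ ℕ) : AddSubgroup (MvPowerSeries σ R) where
  carrier := {g | ∀ β, a ≤ β → coeff β g = 0}
  zero_mem' _ _ := map_zero _
  add_mem' hg hh β hβ := by rw [map_add, hg β hβ, hh β hβ, add_zero]
  neg_mem' hg β hβ := by rw [map_neg, hg β hβ, neg_zero]

theorem mem_remainders_iff_coeff_add {a : σ →₀ ℕ} {g : MvPowerSeries σ R} :
    g ∈ remainders R a ↔ ∀ γ, coeff (a + γ) g = 0 := by
  refine ⟨fun hg γ => hg _ le_self_add, fun hg β hβ => ?_⟩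
  obtain ⟨γ, rfl⟩ := exists_add_of_le hβ
  exact hg γ

variable [AddCommMonoid M] [PartialOrder M]

/-- `a` is the `w`-minimal exponent of `P`, for an additive weight `w` on exponents. Over a general
ring, the coefficient at `a` is asked to be invertible rather than only nonzero. -/
structure IsInitialExponent (w : (σ →₀ ℕ) →+ M) (P : MvPowerSeries σ R) (a : σ →₀ ℕ) : Prop where
  isUnit_coeff : IsUnit (coeff a P)
  lt_of_coeff_ne_zero : ∀ β, coeff β P ≠ 0 → β ≠ a → w a < w β

namespace IsInitialExponent

variable [IsOrderedCancelAddMonoid M] {w : (σ →₀ ℕ) →+ M} {P : MvPowerSeries σ R} {a : σ →₀ ℕ}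

theorem coeff_add_mul (hP : IsInitialExponent w P a) {q : MvPowerSeries σ R} {γ : σ →₀ ℕ}
    (hq : ∀ β, w β < w γ → coeff β q = 0) :
    coeff (a + γ) (q * P) = coeff γ q * coeff a P := by
  classical
  rw [coeff_mul]
  refine Finset.sum_eq_single_of_mem (γ, a) (by simp [add_comm]) ?_
  rintro ⟨β, δ⟩ hmem hne
  replace hmem : β + δ = γ + a := by simpa [add_comm a] using hmem
  by_cases hδ : coeff δ P = 0
  · rw [hδ, mul_zero]
  have hδa : δ ≠ a := by
    rintro rfl
    exact hne (by rw [add_right_cancel hmem])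
  have hβγ : w β + w a < w γ + w a :=
    calc w β + w a < w β + w δ := by gcongr; exact hP.lt_of_coeff_ne_zero δ hδ hδa
      _ = w γ + w a := by rw [← map_add, hmem, map_add]
  rw [hq β (lt_of_add_lt_add_right hβγ), zero_mul]

theorem existsUnique_sub_mul_mem_remainders (hP : IsInitialExponent w P a)
    (hw : WellFounded fun β γ => w β < w γ) (f : MvPowerSeries σ R) :
    ∃! q, f - q * P ∈ remainders R a := by
  obtain ⟨u, hu⟩ := hP.isUnit_coeff
  -- In `improve q γ` the contribution of `coeff γ q` cancels, so only lower coefficients matter.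
  let improve (q : MvPowerSeries σ R) : MvPowerSeries σ R := fun γ =>
    coeff γ q + coeff (a + γ) (f - q * P) * ↑u⁻¹
  have improve_congr (q q' : MvPowerSeries σ R) (γ : σ →₀ ℕ)
      (h : ∀ β, w β < w γ → coeff β q = coeff β q') : improve q γ = improve q' γ := by
    have hlead := hP.coeff_add_mul (q := q - q') (γ := γ) fun β hβ => by
      rw [map_sub, h β hβ, sub_self]
    rw [← sub_eq_zero]
    calc improve q γ - improve q' γ
        = coeff γ (q - q') - coeff (a + γ) ((q - q') * P) * ↑u⁻¹ := by
          simp only [improve, sub_mul, map_sub]; abel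
      _ = 0 := by rw [hlead, ← hu, Units.mul_inv_cancel_right, sub_self]
  have isFixedPt_iff (q : MvPowerSeries σ R) :
      Function.IsFixedPt improve q ↔ f - q * P ∈ remainders R a := by
    rw [mem_remainders_iff_coeff_add]
    refine funext_iff.trans (forall_congr' fun γ => ?_)
    exact add_eq_left.trans (Units.mul_left_eq_zero _)
  exact (existsUnique_congr isFixedPt_iff).1
    (existsUnique_isFixedPt_of_wellFounded hw improve improve_congr)

end IsInitialExponent

theorem unique_P_adic_expansion_formal_general [IsOrderedCancelAddMonoid M]
    {w : (σ →₀ ℕ) →+ M} (hw : WellFounded fun β γ => w β < w γ)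
    {P : MvPowerSeries σ R} {a : σ →₀ ℕ} (hP : IsInitialExponent w P a)
    (f : MvPowerSeries σ R) :
    ∃! g : ℕ → MvPowerSeries σ R,
      (∀ n β, a ≤ β → coeff β (g n) = 0) ∧
      ∀ N, ∃ q, f - ∑ n ∈ Finset.range N, g n * P ^ n = q * P ^ N :=
  existsUnique_adic_expansion_of_existsUnique_sub_mul_mem
    (hP.existsUnique_sub_mul_mem_remainders hw) f

end WeierstrassDivision

/-- **Unique P-adic expansion of formal power series** (Corollary 2.6).
With `ℓ`, `P`, `a` as in the generalized Weierstrass division, every formal power series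
`f` can be written uniquely as `f = Σ g_n·P^n` where the coefficients of each `g_n` vanish
on `a + ℕ^d`; the partial-sum condition says `f − Σ_{n<N} g_n·P^n` lies in the ideal `(P^N)`. -/
theorem unique_P_adic_expansion_formal
    (d : ℕ) (hd : 1 ≤ d) (ℓ : Fin d → ℝ) (hℓpos : ∀ j, 0 < ℓ j)
    (hℓinj : Function.Injective fun β : Fin d →₀ ℕ => ∑ j, ℓ j * (β j : ℝ))
    (P : MvPowerSeries (Fin d) ℂ) (hP : P ≠ 0)
    (hP0 : MvPowerSeries.constantCoeff P = 0)
    (a : Fin d →₀ ℕ)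
    (ha : MvPowerSeries.coeff a P ≠ 0)
    (hamin : ∀ β : Fin d →₀ ℕ, MvPowerSeries.coeff β P ≠ 0 → β ≠ a →
      ∑ j, ℓ j * (a j : ℝ) < ∑ j, ℓ j * (β j : ℝ))
    (f : MvPowerSeries (Fin d) ℂ) :
    ∃! g : ℕ → MvPowerSeries (Fin d) ℂ,
      (∀ n : ℕ, ∀ β : Fin d →₀ ℕ, a ≤ β → MvPowerSeries.coeff β (g n) = 0) ∧
      (∀ N : ℕ, ∃ q : MvPowerSeries (Fin d) ℂ,
        f - ∑ n ∈ Finset.range N, g n * P ^ n = q * P ^ N) := by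
  have hPa : IsInitialExponent (Finsupp.weight ℓ) P a :=
    ⟨ha.isUnit, by simpa only [Finsupp.weight_eq_sum, nsmul_eq_mul, mul_comm] using hamin⟩
  exact unique_P_adic_expansion_formal_general
    (wellFounded_lt_of_monotone (monotone_weight fun j => (hℓpos j).le)) hPa f
end
end
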